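/- arXiv:1410.3889 — 8 statements merged into one kernel-verified Lean document; each statement's English description precedes it below -/
import Mathlib

section
/- Let V be a finite set with distinguished distinct vertices s, t ∈ V, let cap, dem : V × V → ℝ≥0 be symmetric functions vanishing on the diagonal, and let f : V → ℝ^m be a map with Σ_{u,v∈V} dem(u,v)·‖f(u)−f(v)‖₁ > 0. Then there exists a cut (S, V∖S) with ∅ ⊊ S ⊊ V such that Σ_{u∈S,v∈V∖S} dem(u,v) > 0 and sp(S) ≤ (Σ_{u,v∈V} cap(u,v)·‖f(u)−f(v)‖₁) / (Σ_{u,v∈V} dem(u,v)·‖f(u)−f(v)‖₁). Moreover, if f is st-sandwiching, then S can be chosen so that the cut (S, V∖S) is st-separating. -/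
/-!
The layer cake formula `|x - y| = ∫ a, 1[a ∈ uIoc x y]` writes the `L¹`-distance between the images
of two vertices as an average, over coordinates `ω` and thresholds `a`, of the cut metrics of the
sublevel sets `{v | f v ω < a}`. The capacity and the demand of `f` are therefore the same average
of the capacities and the demands of these cuts, so some cut of positive demand has capacity at most
`R` times its demand, where `R` is the ratio of the averages. A cut metric counts the pairs crossing
the cut in both directions; for weights that are not symmetric, one direction, that is, the sublevel
set or its complement, still does at least as well as their sum. If `s` minimizes and `t` maximizes
every coordinate, then every proper nonempty sublevel set contains `s` and misses `t`.
-/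

open MeasureTheory Set Filter

section Averaging

variable {X : Type*} [MeasurableSpace X] {μ : Measure X}

theorem frequently_pos_and_le_mul_of_integral_le {p q : X → ℝ} {R : ℝ}
    (hp : 0 ≤ᵐ[μ] p) (hq : 0 ≤ᵐ[μ] q) (hp_int : Integrable p μ) (hq_int : Integrable q μ)
    (hpos : 0 < ∫ x, q x ∂μ) (hle : ∫ x, p x ∂μ ≤ R * ∫ x, q x ∂μ) :
    ∃ᵐ x ∂μ, 0 < q x ∧ p x ≤ R * q x := by
  by_contra hnot
  have hlt : ∀ᵐ x ∂μ, 0 < q x → R * q x < p x := by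
    simpa only [not_frequently, not_and, not_le] using hnot
  have hgap_nonneg : 0 ≤ᵐ[μ] fun x ↦ p x - R * q x := by
    filter_upwards [hlt, hp, hq] with x hx hpx hqx
    rcases hqx.eq_or_lt with hqx | hqx
    · simpa [← hqx] using hpx
    · exact sub_nonneg.2 (hx hqx).le
  have hgap_int : Integrable (fun x ↦ p x - R * q x) μ := hp_int.sub (hq_int.const_mul R)
  have hgap_integral : ∫ x, (p x - R * q x) ∂μ = 0 := by
    refine le_antisymm ?_ (integral_nonneg_of_ae hgap_nonneg)
    rw [integral_sub hp_int (hq_int.const_mul R), integral_const_mul]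
    exact sub_nonpos.2 hle
  have hq_zero : q =ᵐ[μ] 0 := by
    have hgap_zero := (integral_eq_zero_iff_of_nonneg_ae hgap_nonneg hgap_int).1 hgap_integral
    filter_upwards [hlt, hq, hgap_zero] with x hx hqx hgap
    exact (hqx.eq_or_lt.resolve_right fun hqx ↦ (sub_pos.2 (hx hqx)).ne' hgap).symm
  exact hpos.ne' (integral_eq_zero_of_ae hq_zero)

theorem frequently_sum_pos_and_sum_le_mul_of_sum_integral_le {ι κ : Type*} [Fintype ι] [Fintype κ]
    {p q : ι → κ → ℝ} {d : ι → κ → X → ℝ} {R : ℝ}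
    (hp : ∀ i j, 0 ≤ p i j) (hq : ∀ i j, 0 ≤ q i j) (hd : ∀ i j x, 0 ≤ d i j x)
    (hd_int : ∀ i j, Integrable (d i j) μ) (hpos : 0 < ∑ i, ∑ j, q i j * ∫ x, d i j x ∂μ)
    (hle : ∑ i, ∑ j, p i j * ∫ x, d i j x ∂μ ≤ R * ∑ i, ∑ j, q i j * ∫ x, d i j x ∂μ) :
    ∃ᵐ x ∂μ, 0 < ∑ i, ∑ j, q i j * d i j x ∧
      ∑ i, ∑ j, p i j * d i j x ≤ R * ∑ i, ∑ j, q i j * d i j x := by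
  have hnonneg {w : ι → κ → ℝ} (hw : ∀ i j, 0 ≤ w i j) :
      0 ≤ᵐ[μ] fun x ↦ ∑ i, ∑ j, w i j * d i j x :=
    ae_of_all μ fun x ↦ Finset.sum_nonneg fun i _ ↦ Finset.sum_nonneg fun j _ ↦
      mul_nonneg (hw i j) (hd i j x)
  have hterm_int (w : ι → κ → ℝ) (i j) : Integrable (fun x ↦ w i j * d i j x) μ :=
    (hd_int i j).const_mul (w i j)
  have hrow_int (w : ι → κ → ℝ) (i) : Integrable (fun x ↦ ∑ j, w i j * d i j x) μ :=
    integrable_finsetSum _ fun j _ ↦ hterm_int w i j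
  have hint (w : ι → κ → ℝ) : Integrable (fun x ↦ ∑ i, ∑ j, w i j * d i j x) μ :=
    integrable_finsetSum _ fun i _ ↦ hrow_int w i
  have hintegral (w : ι → κ → ℝ) :
      ∑ i, ∑ j, w i j * ∫ x, d i j x ∂μ = ∫ x, ∑ i, ∑ j, w i j * d i j x ∂μ := by
    rw [integral_finsetSum _ fun i _ ↦ hrow_int w i]
    simp_rw [integral_finsetSum _ fun j _ ↦ hterm_int w _ j, integral_const_mul]
  rw [hintegral] at hpos
  rw [hintegral, hintegral] at hle
  exact frequently_pos_and_le_mul_of_integral_le (hnonneg hp) (hnonneg hq) (hint p) (hint q)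
    hpos hle

end Averaging

theorem pos_and_le_mul_or_of_add_le_mul_add {K : Type*} [CommRing K] [LinearOrder K]
    [IsStrictOrderedRing K] {p₁ p₂ q₁ q₂ R : K} (hp₁ : 0 ≤ p₁) (hp₂ : 0 ≤ p₂) (hq₁ : 0 ≤ q₁)
    (hq₂ : 0 ≤ q₂) (hpos : 0 < q₁ + q₂) (hle : p₁ + p₂ ≤ R * (q₁ + q₂)) :
    (0 < q₁ ∧ p₁ ≤ R * q₁) ∨ (0 < q₂ ∧ p₂ ≤ R * q₂) := by
  rw [mul_add] at hle
  rcases hq₁.eq_or_lt with rfl | hq₁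
  · exact Or.inr ⟨by linarith, by linarith⟩
  rcases hq₂.eq_or_lt with rfl | hq₂
  · exact Or.inl ⟨hq₁, by linarith⟩
  rcases le_or_gt p₁ (R * q₁) with hle₁ | hgt₁
  · exact Or.inl ⟨hq₁, hle₁⟩
  · exact Or.inr ⟨hq₂, by linarith⟩

theorem integrable_indicator_uIoc_one (x y : ℝ) : Integrable ((uIoc x y).indicator (1 : ℝ → ℝ)) :=
  (integrable_indicator_iff measurableSet_uIoc).2 (integrableOn_const (by simp))

theorem integral_indicator_uIoc_one (x y : ℝ) :
    ∫ a, (uIoc x y).indicator (1 : ℝ → ℝ) a = |x - y| := by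
  rw [integral_indicator_one measurableSet_uIoc]
  simp [measureReal_def, abs_sub_comm]

/-- The cut given by its side `S` is `st`-separating: `S` contains exactly one of `s` and `t`. -/
def Separates {V : Type*} (s t : V) (S : Finset V) : Prop :=
  (s ∈ S ∧ t ∉ S) ∨ (s ∉ S ∧ t ∈ S)

/-- The map `g` is `st`-sandwiching: `s` minimizes it and `t` maximizes it. A map into a
product of orders is `st`-sandwiching exactly when each of its coordinates is. -/
def IsSandwiching {V α : Type*} [LE α] (s t : V) (g : V → α) : Prop :=
  ∀ v, g s ≤ g v ∧ g v ≤ g t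

section Cuts

variable {V : Type*} [Fintype V]

theorem IsSandwiching.separates_sublevel {α : Type*} [LinearOrder α] {g : V → α} {a : α}
    {s t u v : V} (hg : IsSandwiching s t g) (hu : u ∈ ({z | g z < a} : Finset V))
    (hv : v ∉ ({z | g z < a} : Finset V)) : Separates s t {z | g z < a} := by
  simp only [Finset.mem_filter_univ, not_lt] at hu hv
  exact Or.inl ⟨by simpa using (hg u).1.trans_lt hu, by simpa using hv.trans (hg v).2⟩

variable [DecidableEq V]

theorem Separates.compl {s t : V} {S : Finset V} (h : Separates s t S) : Separates s t Sᶜ := by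
  simpa only [Separates, Finset.mem_compl, not_not] using Or.symm h

/-- The total weight `w(S, V ∖ S)` of the pairs leaving `S`: the numerator of the sparsity of a cut
for `w = cap`, the denominator for `w = dem`. The weight `w` need not be symmetric, so `S` and its
complement may have different cut weights. -/
def cutWeight (w : V → V → ℝ) (S : Finset V) : ℝ :=
  ∑ u ∈ S, ∑ v ∈ Sᶜ, w u v

theorem cutWeight_nonneg {w : V → V → ℝ} (hw : ∀ u v, 0 ≤ w u v) (S : Finset V) :
    0 ≤ cutWeight w S :=
  Finset.sum_nonneg fun u _ ↦ Finset.sum_nonneg fun v _ ↦ hw u v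

theorem exists_mem_and_exists_notMem_of_cutWeight_ne_zero {w : V → V → ℝ} {S : Finset V}
    (h : cutWeight w S ≠ 0) : (∃ u, u ∈ S) ∧ ∃ v, v ∉ S := by
  obtain ⟨u, hu, hsum⟩ := Finset.exists_ne_zero_of_sum_ne_zero h
  obtain ⟨v, hv, -⟩ := Finset.exists_ne_zero_of_sum_ne_zero hsum
  exact ⟨⟨u, hu⟩, v, Finset.mem_compl.1 hv⟩

theorem sum_mul_indicator_uIoc_eq_cutWeight_add_cutWeight_compl (w : V → V → ℝ) (g : V → ℝ)
    (a : ℝ) :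
    ∑ u, ∑ v, w u v * (uIoc (g u) (g v)).indicator (1 : ℝ → ℝ) a =
      cutWeight w {v | g v < a} + cutWeight w ({v | g v < a} : Finset V)ᶜ := by
  classical
  simp only [cutWeight, Finset.compl_filter, not_not, Finset.sum_filter, ← Finset.sum_add_distrib]
  refine Finset.sum_congr rfl fun u _ ↦ ?_
  by_cases hu : g u < a
  · simp [hu, hu.not_ge, indicator_apply, mem_uIoc]
  · simp [hu, not_lt.1 hu, indicator_apply, mem_uIoc]

theorem exists_sparse_cut_of_real_map {cap dem : V → V → ℝ} {R : ℝ}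
    (hcap : ∀ u v, 0 ≤ cap u v) (hdem : ∀ u v, 0 ≤ dem u v) (g : V → ℝ)
    (hpos : 0 < ∑ u, ∑ v, dem u v * |g u - g v|)
    (hle : ∑ u, ∑ v, cap u v * |g u - g v| ≤ R * ∑ u, ∑ v, dem u v * |g u - g v|) :
    ∃ S : Finset V, 0 < cutWeight dem S ∧ cutWeight cap S ≤ R * cutWeight dem S ∧
      ∀ s t, IsSandwiching s t g → Separates s t S := by
  simp_rw [← integral_indicator_uIoc_one] at hpos hle
  have hcut_nonneg (u v : V) (a : ℝ) : 0 ≤ (uIoc (g u) (g v)).indicator (1 : ℝ → ℝ) a :=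
    indicator_nonneg (fun _ _ ↦ zero_le_one) a
  obtain ⟨a, hpos_a, hle_a⟩ := (frequently_sum_pos_and_sum_le_mul_of_sum_integral_le hcap hdem
    hcut_nonneg (fun u v ↦ integrable_indicator_uIoc_one (g u) (g v)) hpos hle).exists
  simp only [sum_mul_indicator_uIoc_eq_cutWeight_add_cutWeight_compl] at hpos_a hle_a
  rcases pos_and_le_mul_or_of_add_le_mul_add (cutWeight_nonneg hcap _) (cutWeight_nonneg hcap _)
    (cutWeight_nonneg hdem _) (cutWeight_nonneg hdem _) hpos_a hle_a with h | h
  · obtain ⟨⟨u, hu⟩, v, hv⟩ := exists_mem_and_exists_notMem_of_cutWeight_ne_zero h.1.ne'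
    exact ⟨_, h.1, h.2, fun s t hg ↦ hg.separates_sublevel hu hv⟩
  · obtain ⟨⟨v, hv⟩, u, hu⟩ := exists_mem_and_exists_notMem_of_cutWeight_ne_zero h.1.ne'
    rw [Finset.mem_compl] at hv
    rw [Finset.notMem_compl] at hu
    exact ⟨_, h.1, h.2, fun s t hg ↦ (hg.separates_sublevel hu hv).compl⟩

theorem stmt0_general {Ω : Type*} [MeasurableSpace Ω] (μ : Measure Ω) (s t : V)
    (cap dem : V → V → ℝ) (hcap : ∀ u v, 0 ≤ cap u v) (hdem : ∀ u v, 0 ≤ dem u v)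
    (f : V → Ω → ℝ) (hf : ∀ v, Integrable (f v) μ)
    (hpos : 0 < ∑ u, ∑ v, dem u v * ∫ ω, |f u ω - f v ω| ∂μ) :
    ∃ S : Finset V, S.Nonempty ∧ S ≠ Finset.univ ∧ 0 < cutWeight dem S ∧
      cutWeight cap S / cutWeight dem S ≤
        (∑ u, ∑ v, cap u v * ∫ ω, |f u ω - f v ω| ∂μ) /
          (∑ u, ∑ v, dem u v * ∫ ω, |f u ω - f v ω| ∂μ) ∧
      ((∀ᵐ ω ∂μ, IsSandwiching s t (f · ω)) → Separates s t S) := by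
  have hcoord := frequently_sum_pos_and_sum_le_mul_of_sum_integral_le hcap hdem
    (fun u v ω ↦ abs_nonneg (f u ω - f v ω)) (fun u v ↦ ((hf u).sub (hf v)).abs) hpos
    (div_mul_cancel₀ _ hpos.ne').ge
  have hsandwich : ∀ᵐ ω ∂μ,
      (∀ᵐ ω' ∂μ, IsSandwiching s t (f · ω')) → IsSandwiching s t (f · ω) :=
    eventually_imp_distrib_left.2 id
  obtain ⟨ω, ⟨hpos_ω, hle_ω⟩, hsandwich_ω⟩ := (hcoord.and_eventually hsandwich).exists
  obtain ⟨S, hpos_S, hle_S, hsep⟩ := exists_sparse_cut_of_real_map hcap hdem (f · ω) hpos_ω hle_ω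
  obtain ⟨hne, v, hv⟩ := exists_mem_and_exists_notMem_of_cutWeight_ne_zero hpos_S.ne'
  exact ⟨S, hne, fun h ↦ hv (h ▸ Finset.mem_univ v), hpos_S, (div_le_iff₀ hpos_S).2 hle_S,
    fun h ↦ hsep s t (hsandwich_ω h)⟩

end Cuts

/-- Lemma 2.2 (`lmm_l1`): sparse cuts via `ℓ₁`-embeddings.
Given `f : V → ℝ^m` with positive demand-weighted total `ℓ₁`-length, there is a
cut `(S, V∖S)` of positive demand whose sparsity is at most the capacity/demand
ratio of the `ℓ₁`-lengths; moreover, if `f` is `st`-sandwiching then the cut can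
be chosen `st`-separating. -/
theorem stmt0 {V : Type*} [Fintype V] [DecidableEq V] (s t : V) (hst : s ≠ t)
    (cap dem : V → V → ℝ)
    (hcap0 : ∀ u v, 0 ≤ cap u v) (hdem0 : ∀ u v, 0 ≤ dem u v)
    (hcapsym : ∀ u v, cap u v = cap v u) (hdemsym : ∀ u v, dem u v = dem v u)
    (hcapdiag : ∀ v, cap v v = 0) (hdemdiag : ∀ v, dem v v = 0)
    (m : ℕ) (f : V → Fin m → ℝ)
    (hpos : 0 < ∑ u, ∑ v, dem u v * (∑ i, |f u i - f v i|)) :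
    ∃ S : Finset V, S.Nonempty ∧ S ≠ Finset.univ ∧
      (0 < ∑ u ∈ S, ∑ v ∈ Sᶜ, dem u v) ∧
      (∑ u ∈ S, ∑ v ∈ Sᶜ, cap u v) / (∑ u ∈ S, ∑ v ∈ Sᶜ, dem u v) ≤
        (∑ u, ∑ v, cap u v * (∑ i, |f u i - f v i|)) /
          (∑ u, ∑ v, dem u v * (∑ i, |f u i - f v i|)) ∧
      ((∀ i : Fin m, ∀ v : V, f s i ≤ f v i ∧ f v i ≤ f t i) →
        ((s ∈ S ∧ t ∉ S) ∨ (s ∉ S ∧ t ∈ S))) := by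
  simpa only [cutWeight, IsSandwiching, Separates, integral_count, Measure.ae_count_iff] using
    stmt0_general .count s t cap dem hcap0 hdem0 f (fun _ ↦ .of_finite) (by simpa using hpos)
end

section
/- Let d be an st-separating semi-metric on a finite set V with distinguished distinct points s, t ∈ V, and let A ⊆ V be nonempty. Then the map f_A^± : V → ℝ² is st-sandwiching: for each σ ∈ {+1,−1} and every v ∈ V, f_A^σ(s) ≤ f_A^σ(v) ≤ f_A^σ(t). -/
/-!
If `x` lies on a geodesic from `s` to `y`, then `d(·, s)` increases by exactly `d(x, y)` from `x`
to `y`, which outweighs the largest possible decrease of a `1`-Lipschitz function such as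
`σ · d(·, A)`. In an `st`-separating semi-metric every point lies on a geodesic from `s` to `t`.
-/

section PseudoMetricSpace

variable {V : Type*} [PseudoMetricSpace V]

theorem dist_add_le_dist_add_of_lipschitzWith_one {f : V → ℝ} (hf : LipschitzWith 1 f)
    {s x y : V} (hx : dist s y = dist s x + dist x y) :
    dist x s + f x ≤ dist y s + f y :=
  calc
    dist x s + f x ≤ dist x s + (f y + dist x y) := by
      gcongr
      simpa using hf.le_add_mul x y
    _ = dist y s + f y := by
      rw [dist_comm y s, hx, dist_comm x s]
      ring

theorem lipschitzWith_one_const_mul_infDist {σ : ℝ} (hσ : |σ| ≤ 1) (A : Set V) :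
    LipschitzWith 1 fun v => σ * Metric.infDist v A := by
  refine ((lipschitzWith_smul σ).comp (Metric.lipschitz_infDist_pt A)).weaken ?_
  rw [mul_one, ← NNReal.coe_le_coe]
  exact hσ

theorem infDist_coe_finset (A : Finset V) (hA : A.Nonempty) (v : V) :
    Metric.infDist v A = A.inf' hA fun a => dist v a := by
  rw [Metric.infDist_eq_iInf, Finset.inf'_eq_csInf_image, sInf_image']

theorem lipschitzWith_one_const_mul_inf'_dist {σ : ℝ} (hσ : |σ| ≤ 1) (A : Finset V)
    (hA : A.Nonempty) : LipschitzWith 1 fun v => σ * A.inf' hA fun a => dist v a := by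
  simpa only [infDist_coe_finset A hA] using lipschitzWith_one_const_mul_infDist hσ (A : Set V)

theorem stmt4_general {f : V → ℝ} (hf : LipschitzWith 1 f) {s t v : V}
    (hv : dist s t = dist s v + dist v t) :
    (dist s s + f s) / 2 ≤ (dist v s + f v) / 2 ∧
      (dist v s + f v) / 2 ≤ (dist t s + f t) / 2 := by
  have hsv : dist s v = dist s s + dist s v := by rw [dist_self, zero_add]
  constructor <;> gcongr ?_ / 2
  · exact dist_add_le_dist_add_of_lipschitzWith_one hf hsv
  · exact dist_add_le_dist_add_of_lipschitzWith_one hf hv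

end PseudoMetricSpace

/-- Proposition 2.10 (`prop_separation`): the map `f_A^±` is `st`-sandwiching,
i.e. for each sign `σ ∈ {+1, −1}` and every `v`,
`f_A^σ(s) ≤ f_A^σ(v) ≤ f_A^σ(t)` where `f_A^σ(v) = (d(v,s) + σ·d(v,A))/2`. -/
theorem stmt4 {V : Type*} [Fintype V] (s t : V) (hst : s ≠ t)
    (d : V → V → ℝ) (hnn : ∀ u v, 0 ≤ d u v)
    (hsym : ∀ u v, d u v = d v u) (hdiag : ∀ v, d v v = 0)
    (htri : ∀ u v w, d u v ≤ d u w + d w v)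
    (hsep : ∀ v, d s t = d s v + d v t)
    (A : Finset V) (hA : A.Nonempty) :
    ∀ σ : ℝ, (σ = 1 ∨ σ = -1) → ∀ v : V,
      (d s s + σ * A.inf' hA fun a => d s a) / 2 ≤
          (d v s + σ * A.inf' hA fun a => d v a) / 2 ∧
        (d v s + σ * A.inf' hA fun a => d v a) / 2 ≤
          (d t s + σ * A.inf' hA fun a => d t a) / 2 := by
  intro σ hσ v
  let _ : PseudoMetricSpace V :=
    { dist := d
      dist_self := hdiag
      dist_comm := hsym
      dist_triangle := fun x y z => htri x z y }
  have hσ_abs : |σ| ≤ 1 := ((abs_eq zero_le_one).2 hσ).le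
  exact stmt4_general (lipschitzWith_one_const_mul_inf'_dist hσ_abs A hA) (hsep v)
end

section
/- Let V be a finite set with distinguished distinct vertices s, t ∈ V, cap : V × V → ℝ≥0 symmetric vanishing on the diagonal, and μ a probability distribution on V. Let (S, V∖S) be an st-separating cut with α := Σ_{(u,v)∈V×V, u and v separated by S} μ(u)·μ(v) > 0. Define x : V → ℝ by x_u = 0 for u ∈ S and x_u = α^{−1/2} for u ∈ V∖S. Then: (i) |x_u − x_v|² ≤ |x_u − x_w|² + |x_w − x_v|² for all u, v, w ∈ V; (ii) |x_s − x_t|² = |x_s − x_v|² + |x_v − x_t|² for all v ∈ V; (iii) Σ_{u,v∈V} μ(u)μ(v)·|x_u − x_v|² = 1; and (iv) Σ_{u,v∈V} cap(u,v)·|x_u − x_v|² equals the sparsity sp(S) with respect to demands dem(u,v) = μ(u)μ(v). In particular, the semidefinite programming relaxation is a relaxation of st-ProductSparsestCut. -/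
/-!
All squared distances of the solution `x` equal `α⁻¹ * δ_S`, where `δ_S` is the cut semimetric of
`S`. The triangle inequality holds for every cut semimetric, and it is an equality through any
point when the endpoints are separated. Summing symmetric weights against `δ_S` gives twice the
weight across the cut; the factor `2` cancels between the capacities and the demands.
-/

/-- The cut semimetric `δ_S` of a set `S` of points: the `0`-`1` distance on points that records
whether they are separated by `S`, through which weights across the cut become sums over all
ordered pairs. The values lie in an arbitrary `R`, given explicitly. -/
def cutSemimetric {V : Type*} [DecidableEq V] (R : Type*) [Zero R] [One R] (S : Finset V)
    (u v : V) : R :=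
  if (u ∈ S ↔ v ∈ S) then 0 else 1

section CutSemimetric

variable {V R : Type*} [DecidableEq V]

theorem mul_cutSemimetric [MulZeroOneClass R] (S : Finset V) (u v : V) (r : R) :
    r * cutSemimetric R S u v = if (u ∈ S ↔ v ∈ S) then 0 else r := by
  rw [cutSemimetric, mul_ite, mul_zero, mul_one]

theorem cutSemimetric_compl [Fintype V] [Zero R] [One R] (S : Finset V) :
    cutSemimetric R Sᶜ = cutSemimetric R S := by
  ext u v
  simp only [cutSemimetric, Finset.mem_compl, not_iff_not]

theorem cutSemimetric_triangle [Semiring R] [PartialOrder R] [IsOrderedRing R] (S : Finset V)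
    (u v w : V) :
    cutSemimetric R S u v ≤ cutSemimetric R S u w + cutSemimetric R S w v := by
  by_cases hu : u ∈ S <;> by_cases hv : v ∈ S <;> by_cases hw : w ∈ S <;>
    simp [cutSemimetric, hu, hv, hw, add_nonneg]

theorem cutSemimetric_eq_add_of_separated [AddZeroClass R] [One R] {S : Finset V} {s t : V}
    (hst : ¬(s ∈ S ↔ t ∈ S)) (v : V) :
    cutSemimetric R S s t = cutSemimetric R S s v + cutSemimetric R S v t := by
  by_cases hs : s ∈ S <;> by_cases ht : t ∈ S <;> by_cases hv : v ∈ S <;>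
    simp_all [cutSemimetric]

theorem sq_abs_sub_eq_mul_cutSemimetric [CommRing R] [LinearOrder R] [IsOrderedRing R]
    {S : Finset V} {a b : R} {x : V → R} (hx : ∀ u, x u = if u ∈ S then a else b) (u v : V) :
    |x u - x v| ^ 2 = (a - b) ^ 2 * cutSemimetric R S u v := by
  rw [sq_abs, hx, hx, mul_cutSemimetric]
  by_cases hu : u ∈ S <;> by_cases hv : v ∈ S <;> simp [hu, hv, sub_sq_comm b a]

variable [Fintype V]

theorem sum_mul_cutSemimetric_of_mem [NonAssocSemiring R] {S : Finset V} {u : V} (hu : u ∈ S)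
    (g : V → R) :
    ∑ v, g v * cutSemimetric R S u v = ∑ v ∈ Sᶜ, g v := by
  simpa [mul_cutSemimetric, hu] using Finset.sum_ite_mem Finset.univ Sᶜ g

theorem sum_mul_cutSemimetric_of_notMem [NonAssocSemiring R] {S : Finset V} {u : V} (hu : u ∉ S)
    (g : V → R) :
    ∑ v, g v * cutSemimetric R S u v = ∑ v ∈ S, g v := by
  simpa only [cutSemimetric_compl, compl_compl] using
    sum_mul_cutSemimetric_of_mem (Finset.mem_compl.mpr hu) g

theorem sum_sum_mul_cutSemimetric [NonAssocSemiring R] (S : Finset V) (f : V → V → R) :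
    ∑ u, ∑ v, f u v * cutSemimetric R S u v =
      ∑ u ∈ S, ∑ v ∈ Sᶜ, f u v + ∑ u ∈ Sᶜ, ∑ v ∈ S, f u v := by
  rw [← Finset.sum_add_sum_compl S]
  congr 1
  · exact Finset.sum_congr rfl fun u hu => sum_mul_cutSemimetric_of_mem hu (f u)
  · exact Finset.sum_congr rfl fun u hu =>
      sum_mul_cutSemimetric_of_notMem (Finset.mem_compl.mp hu) (f u)

theorem sum_sum_mul_cutSemimetric_of_symm [NonAssocSemiring R] (S : Finset V) {f : V → V → R}
    (hf : ∀ u v, f u v = f v u) :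
    ∑ u, ∑ v, f u v * cutSemimetric R S u v = 2 * ∑ u ∈ S, ∑ v ∈ Sᶜ, f u v := by
  have hswap : ∑ u ∈ Sᶜ, ∑ v ∈ S, f u v = ∑ u ∈ S, ∑ v ∈ Sᶜ, f u v := by
    rw [Finset.sum_comm]
    simp only [hf]
  rw [sum_sum_mul_cutSemimetric, hswap, two_mul]

end CutSemimetric

theorem stmt7_general {V : Type*} [Fintype V] [DecidableEq V] {s t : V}
    {cap dem : V → V → ℝ} (hcap : ∀ u v, cap u v = cap v u) (hdem : ∀ u v, dem u v = dem v u)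
    {S : Finset V} (hst : ¬(s ∈ S ↔ t ∈ S)) {α : ℝ}
    (hα : α = ∑ u, ∑ v, if (u ∈ S ↔ v ∈ S) then 0 else dem u v) (hαpos : 0 < α)
    {x : V → ℝ} (hx : ∀ u, x u = if u ∈ S then 0 else (Real.sqrt α)⁻¹) :
    (∀ u v w, |x u - x v| ^ 2 ≤ |x u - x w| ^ 2 + |x w - x v| ^ 2) ∧
    (∀ v, |x s - x t| ^ 2 = |x s - x v| ^ 2 + |x v - x t| ^ 2) ∧
    (∑ u, ∑ v, dem u v * |x u - x v| ^ 2 = 1) ∧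
    (∑ u, ∑ v, cap u v * |x u - x v| ^ 2 =
      (∑ u ∈ S, ∑ v ∈ Sᶜ, cap u v) / (∑ u ∈ S, ∑ v ∈ Sᶜ, dem u v)) := by
  have hdist (u v : V) : |x u - x v| ^ 2 = α⁻¹ * cutSemimetric ℝ S u v := by
    rw [sq_abs_sub_eq_mul_cutSemimetric hx, zero_sub, neg_sq, inv_pow, Real.sq_sqrt hαpos.le]
  have hsum (f : V → V → ℝ) (hf : ∀ u v, f u v = f v u) :
      ∑ u, ∑ v, f u v * |x u - x v| ^ 2 = α⁻¹ * (2 * ∑ u ∈ S, ∑ v ∈ Sᶜ, f u v) := by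
    simp only [hdist, mul_left_comm _ α⁻¹, ← Finset.mul_sum,
      sum_sum_mul_cutSemimetric_of_symm S hf]
  have hcut : α = 2 * ∑ u ∈ S, ∑ v ∈ Sᶜ, dem u v := by
    simpa only [← mul_cutSemimetric, sum_sum_mul_cutSemimetric_of_symm S hdem] using hα
  refine ⟨fun u v w => ?_, fun v => ?_, ?_, ?_⟩
  · simp only [hdist, ← mul_add]
    exact mul_le_mul_of_nonneg_left (cutSemimetric_triangle S u v w) (inv_nonneg.mpr hαpos.le)
  · simp only [hdist, ← mul_add, ← cutSemimetric_eq_add_of_separated hst v]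
  · rw [hsum dem hdem, ← hcut, inv_mul_cancel₀ hαpos.ne']
  · rw [hsum cap hcap, hcut, inv_mul_eq_div, mul_div_mul_left _ _ two_ne_zero]

/-- Lemma 4.2: the SDP (P2) is a relaxation of `st`-ProductSparsestCut.
Given an `st`-separating cut `S` of positive product demand, the one-dimensional
vector solution `x_u = 0` for `u ∈ S`, `x_u = α^{-1/2}` for `u ∉ S` satisfies
all constraints of the SDP and its objective value equals the sparsity. -/
theorem stmt7 {V : Type*} [Fintype V] [DecidableEq V] (s t : V) (hst : s ≠ t)
    (cap : V → V → ℝ)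
    (hcap0 : ∀ u v, 0 ≤ cap u v) (hcapsym : ∀ u v, cap u v = cap v u)
    (hcapdiag : ∀ v, cap v v = 0)
    (μ : V → ℝ) (hμ0 : ∀ v, 0 ≤ μ v) (hμ1 : ∑ v, μ v = 1)
    (S : Finset V) (hS1 : S.Nonempty) (hS2 : S ≠ Finset.univ)
    (hSsep : (s ∈ S ∧ t ∉ S) ∨ (s ∉ S ∧ t ∈ S))
    (α : ℝ)
    (hα : α = ∑ u, ∑ v, if (u ∈ S ↔ v ∈ S) then 0 else μ u * μ v)
    (hαpos : 0 < α)
    (x : V → ℝ) (hx : ∀ u, x u = if u ∈ S then 0 else (Real.sqrt α)⁻¹) :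
    (∀ u v w, |x u - x v| ^ 2 ≤ |x u - x w| ^ 2 + |x w - x v| ^ 2) ∧
    (∀ v, |x s - x t| ^ 2 = |x s - x v| ^ 2 + |x v - x t| ^ 2) ∧
    (∑ u, ∑ v, μ u * μ v * |x u - x v| ^ 2 = 1) ∧
    (∑ u, ∑ v, cap u v * |x u - x v| ^ 2 =
      (∑ u ∈ S, ∑ v ∈ Sᶜ, cap u v) / (∑ u ∈ S, ∑ v ∈ Sᶜ, μ u * μ v)) :=
  stmt7_general hcapsym (fun _ _ => mul_comm _ _) (by tauto) hα hαpos hx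
end

section
/- Let d be a semi-metric on a finite set V and let μ be a probability distribution on V. Then at least one of the following holds: (I) there exists o ∈ V such that the ball B = {v ∈ V : d(v,o) ≤ 1/4} satisfies μ(B) ≥ 1/2; or (II) Σ_{(u,v)∈V×V : d(u,v) > 1/4} μ(u)·μ(v) ≥ 1/2. -/
/-! If every ball has mass below `1 / 2`, then the points far from any given `o` have mass above
`1 / 2`. Averaging over `o` drawn from `μ` bounds the mass of far pairs below by `1 / 2`. -/

theorem le_sum_filter_not_of_sum_filter_le {ι M : Type*} [AddCommMonoid M] [PartialOrder M]
    [IsOrderedCancelAddMonoid M] {s : Finset ι} {p : ι → Prop} [DecidablePred p] {f : ι → M}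
    {a b : M} (hab : a + b ≤ ∑ i ∈ s, f i) (ha : ∑ i ∈ s with p i, f i ≤ a) :
    b ≤ ∑ i ∈ s with ¬ p i, f i := by
  refine le_of_add_le_add_left (a := ∑ i ∈ s with p i, f i) ?_
  calc (∑ i ∈ s with p i, f i) + b
      ≤ a + b := add_le_add_left ha b
    _ ≤ ∑ i ∈ s, f i := hab
    _ = (∑ i ∈ s with p i, f i) + ∑ i ∈ s with ¬ p i, f i :=
      (Finset.sum_filter_add_sum_filter_not s p f).symm

theorem mul_sum_le_sum_sum_ite_mul {ι κ R : Type*} [CommSemiring R] [PartialOrder R]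
    [IsOrderedRing R] {s : Finset ι} {t : Finset κ} {p : ι → κ → Prop}
    [∀ i j, Decidable (p i j)] {f : ι → R} {g : κ → R} {c : R} (hg : ∀ j ∈ t, 0 ≤ g j)
    (hc : ∀ j ∈ t, c ≤ ∑ i ∈ s with p i j, f i) :
    c * ∑ j ∈ t, g j ≤ ∑ i ∈ s, ∑ j ∈ t, if p i j then f i * g j else 0 :=
  calc c * ∑ j ∈ t, g j
      = ∑ j ∈ t, c * g j := Finset.mul_sum ..
    _ ≤ ∑ j ∈ t, (∑ i ∈ s with p i j, f i) * g j :=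
      Finset.sum_le_sum fun j hj ↦ mul_le_mul_of_nonneg_right (hc j hj) (hg j hj)
    _ = ∑ j ∈ t, ∑ i ∈ s, if p i j then f i * g j else 0 := by
      simp only [Finset.sum_filter, Finset.sum_mul, ite_mul, zero_mul]
    _ = ∑ i ∈ s, ∑ j ∈ t, if p i j then f i * g j else 0 := Finset.sum_comm

theorem stmt8_general {V α R : Type*} [Fintype V] [LinearOrder α] [CommSemiring R]
    [LinearOrder R] [IsStrictOrderedRing R] (d : V → V → α) (r : α) {μ : V → R}
    (hμ0 : ∀ v, 0 ≤ μ v) (hμ1 : ∑ v, μ v = 1) {a b : R} (hab : a + b = 1) :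
    (∃ o, a ≤ ∑ v with d v o ≤ r, μ v) ∨
      b ≤ ∑ u, ∑ v, if r < d u v then μ u * μ v else 0 := by
  refine or_iff_not_imp_left.mpr fun hball ↦ ?_
  push Not at hball
  have hfar (o : V) : b ≤ ∑ v with r < d v o, μ v := by
    simpa only [not_le] using
      le_sum_filter_not_of_sum_filter_le (hab.trans hμ1.symm).le (hball o).le
  calc b = b * ∑ v, μ v := by rw [hμ1, mul_one]
    _ ≤ ∑ u, ∑ v, if r < d u v then μ u * μ v else 0 :=
      mul_sum_le_sum_sum_ite_mul (fun v _ ↦ hμ0 v) fun o _ ↦ hfar o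

/-- Lemma 4.3 (`lmm_cases`, Trevisan's dense-ball dichotomy): for any semi-metric
`d` and probability distribution `μ` on a finite set, either some ball of radius
`1/4` has `μ`-measure at least `1/2`, or the `μ×μ`-measure of pairs at distance
greater than `1/4` is at least `1/2`. -/
theorem stmt8 {V : Type*} [Fintype V] [DecidableEq V]
    (d : V → V → ℝ) (hnn : ∀ u v, 0 ≤ d u v)
    (hsym : ∀ u v, d u v = d v u) (hdiag : ∀ v, d v v = 0)
    (htri : ∀ u v w, d u v ≤ d u w + d w v)
    (μ : V → ℝ) (hμ0 : ∀ v, 0 ≤ μ v) (hμ1 : ∑ v, μ v = 1) :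
    (∃ o : V, (1 : ℝ) / 2 ≤ ∑ v ∈ Finset.univ.filter (fun v => d v o ≤ 1 / 4), μ v) ∨
    ((1 : ℝ) / 2 ≤ ∑ u, ∑ v, if 1 / 4 < d u v then μ u * μ v else 0) :=
  stmt8_general d (1 / 4) hμ0 hμ1 (add_halves 1)
end

section
/- Let k ≥ 0, let y_u, y_v ∈ ℝ and z_u, z_v ∈ ℝ^k, and set x_u = (y_u, z_u), x_v = (y_v, z_v) ∈ ℝ^{1+k}. Let g be a random vector in ℝ^k whose coordinates are independent standard Gaussians, and define f_g(w) = y_w + (1/6)·⟨z_w, g⟩ for w ∈ {u,v}. Then (1/16)·‖x_u − x_v‖₂ ≤ E_g |f_g(u) − f_g(v)| ≤ √2·‖x_u − x_v‖₂. -/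
open MeasureTheory ProbabilityTheory

/-!
By linearity, `f_g(u) - f_g(v) = f_g(x)` with `x = (y, z) = x_u - x_v`, and this is a real Gaussian
variable `X` of mean `y` and variance `‖z‖² / 36`. The upper bound is `(E|X|)² ≤ E X²`. For the
lower bound, `E|X|` controls the mean, since `|E X| ≤ E|X|`, and the standard deviation `σ`, since
`σ √(2 / π) = E|X - E X| ≤ 2 E|X|`; together these give `‖x‖² ≤ (1 + 72 π) (E|X|)²`.
-/

open Real WithLp
open scoped NNReal InnerProductSpace

section FirstAbsoluteMoment

variable {Ω : Type*} {mΩ : MeasurableSpace Ω} {P : Measure Ω} [IsProbabilityMeasure P]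
  {X : Ω → ℝ}

lemma integral_abs_sub_integral_le (hX : Integrable X P) :
    ∫ ω, |X ω - P[X]| ∂P ≤ 2 * ∫ ω, |X ω| ∂P :=
  calc ∫ ω, |X ω - P[X]| ∂P
    _ ≤ ∫ ω, (|X ω| + |P[X]|) ∂P :=
      integral_mono (hX.sub (integrable_const _)).abs (hX.abs.add (integrable_const _))
        fun ω ↦ abs_sub (X ω) P[X]
    _ = ∫ ω, |X ω| ∂P + |P[X]| := by
      rw [integral_add hX.abs (integrable_const _)]
      simp
    _ ≤ 2 * ∫ ω, |X ω| ∂P := by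
      linarith [abs_integral_le_integral_abs (f := X) (μ := P)]

lemma sq_integral_abs_le_integral_sq (hX : MemLp X 2 P) :
    (∫ ω, |X ω| ∂P) ^ 2 ≤ ∫ ω, X ω ^ 2 ∂P := by
  have hvar := variance_eq_sub hX.abs
  simp only [Pi.pow_apply, Pi.abs_apply, sq_abs] at hvar
  linarith [variance_nonneg |X| P]

end FirstAbsoluteMoment

section GaussianReal

variable (m : ℝ) (v : ℝ≥0)

lemma integral_Ioi_mul_exp_neg_mul_sq {b : ℝ} (hb : 0 < b) :
    ∫ x in Set.Ioi (0 : ℝ), x * exp (-b * x ^ 2) = (2 * b)⁻¹ := by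
  have h := integral_rpow_mul_exp_neg_mul_rpow two_pos (by norm_num : (-1 : ℝ) < 1) hb
  simpa [one_add_one_eq_two, rpow_neg_one, mul_inv, mul_comm] using h

lemma integral_abs_gaussianReal_zero : ∫ x, |x| ∂(gaussianReal 0 v) = √(2 * v / π) := by
  rcases eq_or_ne v 0 with rfl | hv
  · simp
  calc ∫ x, |x| ∂(gaussianReal 0 v)
    _ = (√(2 * π * v))⁻¹ * ∫ x, |x| * exp (-(2 * v : ℝ)⁻¹ * |x| ^ 2) := by
      rw [integral_gaussianReal_eq_integral_smul hv, ← integral_const_mul]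
      congr with x
      rw [gaussianPDFReal, sub_zero, smul_eq_mul, sq_abs, neg_div, div_eq_inv_mul, neg_mul]
      ring
    _ = (√(2 * π * v))⁻¹ * (2 * v) := by
      rw [integral_comp_abs (f := fun x ↦ x * exp (-(2 * v : ℝ)⁻¹ * x ^ 2)),
        integral_Ioi_mul_exp_neg_mul_sq (by positivity)]
      field_simp
    _ = √(2 * v / π) := by
      symm
      rw [sqrt_eq_iff_mul_self_eq (by positivity) (by positivity), ← sq, mul_pow, inv_pow,
        sq_sqrt (by positivity)]
      field_simp

lemma integral_abs_sub_gaussianReal :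
    ∫ x, |x - m| ∂(gaussianReal m v) = √(2 * v / π) := by
  rw [← integral_abs_gaussianReal_zero, ← sub_self m, ← gaussianReal_map_sub_const m,
    integral_map (by fun_prop) (by fun_prop)]

lemma integral_sq_gaussianReal : ∫ x, x ^ 2 ∂(gaussianReal m v) = m ^ 2 + v := by
  have hvar := variance_eq_sub (memLp_id_gaussianReal (μ := m) (v := v) 2)
  simp only [variance_id_gaussianReal, Pi.pow_apply, id_eq, integral_id_gaussianReal] at hvar
  linarith

lemma sq_le_sq_integral_abs_gaussianReal :
    m ^ 2 ≤ (∫ x, |x| ∂(gaussianReal m v)) ^ 2 := by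
  have h := abs_integral_le_integral_abs (f := id) (μ := gaussianReal m v)
  simp only [id_eq, integral_id_gaussianReal] at h
  exact sq_le_sq.2 (h.trans (le_abs_self _))

lemma variance_le_sq_integral_abs_gaussianReal :
    v ≤ 2 * π * (∫ x, |x| ∂(gaussianReal m v)) ^ 2 := by
  have h := integral_abs_sub_integral_le ((memLp_id_gaussianReal (μ := m) (v := v) 1).integrable
    le_rfl)
  simp only [id_eq, integral_id_gaussianReal, integral_abs_sub_gaussianReal] at h
  rw [sqrt_le_iff, div_le_iff₀ pi_pos] at h
  linarith [h.2]

lemma sq_integral_abs_gaussianReal_le :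
    (∫ x, |x| ∂(gaussianReal m v)) ^ 2 ≤ m ^ 2 + v :=
  (sq_integral_abs_le_integral_sq (memLp_id_gaussianReal 2)).trans_eq
    (integral_sq_gaussianReal m v)

end GaussianReal

section StdGaussian

variable {E : Type*} [NormedAddCommGroup E] [InnerProductSpace ℝ E]

/-- The random functional `f_g` of the paper, evaluated at `x = (y, z)`: the coordinate `y` is kept
and `z` is replaced by `⟪z, g⟫ / 6`. The Euclidean space `ℝ^k` is replaced by an arbitrary inner
product space `E`. -/
noncomputable def randomProjection (g : E) (x : WithLp 2 (ℝ × E)) : ℝ :=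
  x.fst + (1 / 6) * ⟪x.snd, g⟫_ℝ

lemma randomProjection_sub (g : E) (x y : WithLp 2 (ℝ × E)) :
    randomProjection g (x - y) = randomProjection g x - randomProjection g y := by
  simp only [randomProjection, sub_fst, sub_snd, inner_sub_left]
  ring

variable [FiniteDimensional ℝ E] [MeasurableSpace E] [BorelSpace E]

lemma hasLaw_inner_stdGaussian (z : E) :
    HasLaw (fun g ↦ ⟪z, g⟫_ℝ) (gaussianReal 0 (‖z‖₊ ^ 2)) (stdGaussian E) where
  map_eq := by
    have h := IsGaussian.map_eq_gaussianReal (μ := stdGaussian E) (innerSL ℝ z)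
    rw [integral_strongDual_stdGaussian, variance_dual_stdGaussian, innerSL_apply_norm] at h
    convert! h using 2
    simp [Real.toNNReal_pow]

lemma hasLaw_randomProjection (x : WithLp 2 (ℝ × E)) :
    HasLaw (randomProjection · x) (gaussianReal x.fst (‖x.snd‖₊ ^ 2 / 36)) (stdGaussian E) := by
  convert! gaussianReal_const_add (gaussianReal_const_mul (hasLaw_inner_stdGaussian x.snd) (1 / 6))
    x.fst using 2
  · simp
  · ext
    simp only [NNReal.coe_div, NNReal.coe_mul, NNReal.coe_pow, NNReal.coe_mk, coe_nnnorm,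
      NNReal.coe_ofNat]
    ring

lemma integral_abs_randomProjection (x : WithLp 2 (ℝ × E)) :
    ∫ g, |randomProjection g x| ∂(stdGaussian E) =
      ∫ t, |t| ∂(gaussianReal x.fst (‖x.snd‖₊ ^ 2 / 36)) :=
  (hasLaw_randomProjection x).integral_comp (f := fun t ↦ |t|) (by fun_prop)

lemma norm_le_integral_abs_randomProjection (x : WithLp 2 (ℝ × E)) :
    (1 / 16) * ‖x‖ ≤ ∫ g, |randomProjection g x| ∂(stdGaussian E) := by
  have hmean := sq_le_sq_integral_abs_gaussianReal x.fst (‖x.snd‖₊ ^ 2 / 36)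
  have hvar := variance_le_sq_integral_abs_gaussianReal x.fst (‖x.snd‖₊ ^ 2 / 36)
  rw [← integral_abs_randomProjection] at hmean hvar
  push_cast at hvar
  set J := ∫ g, |randomProjection g x| ∂(stdGaussian E)
  have hsq : ‖x‖ ^ 2 ≤ (16 * J) ^ 2 :=
    calc ‖x‖ ^ 2
      _ = x.fst ^ 2 + ‖x.snd‖ ^ 2 := by rw [prod_norm_sq_eq_of_L2, norm_eq_abs, sq_abs]
      _ ≤ (1 + 72 * π) * J ^ 2 := by linarith
      _ ≤ (16 * J) ^ 2 := by nlinarith [pi_lt_d2, sq_nonneg J]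
  have hJ : 0 ≤ 16 * J := mul_nonneg (by norm_num) (integral_nonneg fun g ↦ abs_nonneg _)
  linarith [le_of_sq_le_sq hsq hJ]

lemma integral_abs_randomProjection_le (x : WithLp 2 (ℝ × E)) :
    ∫ g, |randomProjection g x| ∂(stdGaussian E) ≤ ‖x‖ := by
  refine le_of_sq_le_sq ?_ (norm_nonneg x)
  rw [integral_abs_randomProjection, prod_norm_sq_eq_of_L2, norm_eq_abs, sq_abs]
  refine (sq_integral_abs_gaussianReal_le _ _).trans ?_
  push_cast
  linarith [sq_nonneg ‖x.snd‖]

theorem stmt13_general (xu xv : WithLp 2 (ℝ × E)) :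
    (1 / 16) * ‖xu - xv‖ ≤
      ∫ g, |randomProjection g xu - randomProjection g xv| ∂(stdGaussian E) ∧
    ∫ g, |randomProjection g xu - randomProjection g xv| ∂(stdGaussian E) ≤ ‖xu - xv‖ := by
  simp only [← randomProjection_sub]
  exact ⟨norm_le_integral_abs_randomProjection _, integral_abs_randomProjection_le _⟩

end StdGaussian

section EuclideanSpace

variable {ι : Type*} [Fintype ι]

lemma integral_stdGaussian_euclideanSpace {F : Type*} [NormedAddCommGroup F] [NormedSpace ℝ F]
    (f : EuclideanSpace ℝ ι → F) :
    ∫ g, f g ∂(stdGaussian (EuclideanSpace ℝ ι)) =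
      ∫ g, f (toLp 2 g) ∂(Measure.pi fun _ : ι ↦ gaussianReal 0 1) := by
  rw [← map_pi_eq_stdGaussian]
  exact integral_map_equiv (MeasurableEquiv.toLp 2 (ι → ℝ)) f

lemma randomProjection_toLp (g : ι → ℝ) (y : ℝ) (z : ι → ℝ) :
    randomProjection (toLp 2 g) (toLp 2 (y, toLp 2 z)) = y + (1 / 6) * ∑ i, z i * g i := by
  simp [randomProjection, PiLp.inner_apply, mul_comm]

lemma norm_toLp_sub_toLp (y y' : ℝ) (z z' : ι → ℝ) :
    ‖toLp 2 (y, toLp 2 z) - toLp 2 (y', toLp 2 z')‖ =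
      √((y - y') ^ 2 + ∑ i, (z i - z' i) ^ 2) := by
  simp [prod_norm_eq_of_L2, EuclideanSpace.real_norm_sq_eq]

end EuclideanSpace

/-- Claim 4.7 (`f0_claim`): for `x_w = (y_w, z_w) ∈ ℝ × ℝ^k` and a standard
Gaussian random vector `g ∈ ℝ^k`, the random projection
`f_g(w) = y_w + (1/6)·⟨z_w, g⟩` satisfies
`(1/16)·‖x_u − x_v‖₂ ≤ E_g|f_g(u) − f_g(v)| ≤ √2·‖x_u − x_v‖₂`. -/
theorem stmt13 (k : ℕ) (yu yv : ℝ) (zu zv : Fin k → ℝ) :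
    (1 / 16) * Real.sqrt ((yu - yv) ^ 2 + ∑ i, (zu i - zv i) ^ 2) ≤
      (∫ g : Fin k → ℝ,
        |(yu + (1 / 6) * ∑ i, zu i * g i) - (yv + (1 / 6) * ∑ i, zv i * g i)|
        ∂(Measure.pi fun _ : Fin k => gaussianReal 0 1)) ∧
    (∫ g : Fin k → ℝ,
        |(yu + (1 / 6) * ∑ i, zu i * g i) - (yv + (1 / 6) * ∑ i, zv i * g i)|
        ∂(Measure.pi fun _ : Fin k => gaussianReal 0 1)) ≤
      Real.sqrt 2 * Real.sqrt ((yu - yv) ^ 2 + ∑ i, (zu i - zv i) ^ 2) := by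
  simpa only [integral_stdGaussian_euclideanSpace, randomProjection_toLp, norm_toLp_sub_toLp] using
    (stmt13_general (toLp 2 (yu, toLp 2 zu)) (toLp 2 (yv, toLp 2 zv))).imp_right
      (·.trans (le_mul_of_one_le_left (norm_nonneg _) one_lt_sqrt_two.le))
end

section
/- Let T > 0 and k ≥ 0. Let y_u, y_v ∈ [0, T] and z_u, z_v ∈ ℝ^k with ‖z_u‖₂ ≤ T and ‖z_v‖₂ ≤ T. Let g be a random vector in ℝ^k whose coordinates are independent standard Gaussians, and define f_g(w) = y_w + (1/6)·⟨z_w, g⟩ for w ∈ {u,v}. Then the probability over g that all three of the following events hold simultaneously is at least 1/20: (A₁) f_g(v) ∈ [−T/3, 4T/3]; (A₂) f_g(u) ∈ [−T/3, 4T/3]; (A₃) |f_g(u) − f_g(v)| ≥ (1/6)·√((y_u − y_v)² + ‖z_u − z_v‖₂²). -/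
open MeasureTheory ProbabilityTheory

/-!
With `U = ⟨z_u, g⟩` and `V = ⟨z_v, g⟩`, the claim only involves the centered Gaussian variables
`U`, `V` and `U - V`. If `U - V` has the sign of `y_u - y_v` and exceeds its standard deviation in
absolute value, then no cancellation occurs in `f_g(u) - f_g(v)` and `A₃` holds; this happens with
probability at least `3/20`. If `|U| ≤ 2T` then `A₂` holds, and `|U| ≤ 2T` fails with probability
at most `1/20` since `2T` is at least two standard deviations; likewise for `V` and `A₁`. The union
bound leaves `3/20 - 2/20 = 1/20`.
-/

open scoped NNReal Nat

section Exponential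

lemma exists_exp_sub_sum_range_eq (n : ℕ) (x : ℝ) :
    ∃ y, Real.exp x - ∑ i ∈ Finset.range n, x ^ i / i ! = Real.exp y * x ^ n / n ! := by
  obtain _ | n := n
  · exact ⟨x, by simp⟩
  obtain rfl | hx := eq_or_ne 0 x
  · exact ⟨0, by simp [Finset.sum_range_succ']⟩
  obtain ⟨y, -, hy⟩ := taylor_mean_remainder_lagrange_iteratedDeriv (n := n) hx
    Real.contDiff_exp.contDiffOn
  have hderiv (i : ℕ) : iteratedDerivWithin i Real.exp (Set.uIcc 0 x) 0 = 1 := by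
    rw [iteratedDerivWithin_eq_iteratedDeriv (uniqueDiffOn_uIcc hx)
      Real.contDiff_exp.contDiffAt Set.left_mem_uIcc, iteratedDeriv_eq_iterate, Real.iter_deriv_exp,
      Real.exp_zero]
  refine ⟨y, ?_⟩
  simpa [taylor_within_apply, hderiv, iteratedDeriv_eq_iterate, div_eq_inv_mul] using hy

lemma sum_range_pow_div_factorial_le_exp {n : ℕ} (hn : Even n) (x : ℝ) :
    ∑ i ∈ Finset.range n, x ^ i / i ! ≤ Real.exp x := by
  obtain ⟨y, hy⟩ := exists_exp_sub_sum_range_eq n x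
  have hpow : 0 ≤ x ^ n := hn.pow_nonneg x
  exact sub_nonneg.1 (hy ▸ by positivity)

lemma exp_le_sum_range_pow_div_factorial {n : ℕ} (hn : Odd n) {x : ℝ} (hx : x ≤ 0) :
    Real.exp x ≤ ∑ i ∈ Finset.range n, x ^ i / i ! := by
  obtain ⟨y, hy⟩ := exists_exp_sub_sum_range_eq n x
  have hpow : x ^ n ≤ 0 := hn.pow_nonpos hx
  exact sub_nonpos.1 (hy ▸ div_nonpos_of_nonpos_of_nonneg
    (mul_nonpos_of_nonneg_of_nonpos (Real.exp_nonneg y) hpow) (by positivity))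

lemma integral_sum_range_neg_sq_div_two_pow (n : ℕ) (a : ℝ) :
    ∫ x in -a..a, ∑ i ∈ Finset.range n, (-(x ^ 2 / 2)) ^ i / i ! =
      ∑ i ∈ Finset.range n, 2 * (-1 / 2) ^ i * a ^ (2 * i + 1) / ((2 * i + 1) * i !) := by
  rw [intervalIntegral.integral_finsetSum
    fun i _ ↦ Continuous.intervalIntegrable (by fun_prop) _ _]
  refine Finset.sum_congr rfl fun i _ ↦ ?_
  have hmonomial (x : ℝ) : (-(x ^ 2 / 2)) ^ i = (-1 / 2) ^ i * x ^ (2 * i) := by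
    rw [pow_mul, ← mul_pow]
    ring
  simp only [hmonomial, intervalIntegral.integral_div, intervalIntegral.integral_const_mul,
    integral_pow, (odd_two_mul_add_one i).neg_pow]
  push_cast
  field_simp
  ring

lemma integral_neg_one_one_exp_neg_sq_div_two_le :
    ∫ x in (-1 : ℝ)..1, Real.exp (-(x ^ 2 / 2)) ≤ 7 / 4 :=
  calc ∫ x in (-1 : ℝ)..1, Real.exp (-(x ^ 2 / 2))
      ≤ ∫ x in (-1 : ℝ)..1, ∑ i ∈ Finset.range 3, (-(x ^ 2 / 2)) ^ i / i ! :=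
        intervalIntegral.integral_mono_on (by norm_num)
          (Continuous.intervalIntegrable (by fun_prop) _ _)
          (Continuous.intervalIntegrable (by fun_prop) _ _)
          fun x _ ↦ exp_le_sum_range_pow_div_factorial (by decide) (neg_nonpos.2 (by positivity))
    _ ≤ 7 / 4 := by
        rw [integral_sum_range_neg_sq_div_two_pow]
        norm_num [Finset.sum_range_succ, Nat.factorial]

-- Six Taylor terms would give only `2.370…`, too little for the bound `19/20` on `[-2, 2]`.
lemma le_integral_neg_two_two_exp_neg_sq_div_two :
    2.385 ≤ ∫ x in (-2 : ℝ)..2, Real.exp (-(x ^ 2 / 2)) :=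
  calc (2.385 : ℝ)
      ≤ ∫ x in (-2 : ℝ)..2, ∑ i ∈ Finset.range 8, (-(x ^ 2 / 2)) ^ i / i ! := by
        rw [integral_sum_range_neg_sq_div_two_pow]
        norm_num [Finset.sum_range_succ, Nat.factorial]
    _ ≤ ∫ x in (-2 : ℝ)..2, Real.exp (-(x ^ 2 / 2)) :=
        intervalIntegral.integral_mono_on (by norm_num)
          (Continuous.intervalIntegrable (by fun_prop) _ _)
          (Continuous.intervalIntegrable (by fun_prop) _ _)
          fun x _ ↦ sum_range_pow_div_factorial_le_exp (by decide) _

end Exponential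

section GaussianReal

lemma gaussianReal_real_Icc (μ : ℝ) {v : ℝ≥0} (hv : v ≠ 0) {a b : ℝ} (hab : a ≤ b) :
    (gaussianReal μ v).real (Set.Icc a b) = ∫ x in a..b, gaussianPDFReal μ v x := by
  rw [measureReal_def, gaussianReal_apply_eq_integral μ hv,
    ENNReal.toReal_ofReal (integral_nonneg fun x ↦ gaussianPDFReal_nonneg μ v x),
    intervalIntegral.integral_of_le hab, integral_Icc_eq_integral_Ioc]

lemma gaussianReal_zero_one_real_Icc {a b : ℝ} (hab : a ≤ b) :
    (gaussianReal 0 1).real (Set.Icc a b) =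
      (∫ x in a..b, Real.exp (-(x ^ 2 / 2))) / √(2 * Real.pi) := by
  rw [gaussianReal_real_Icc 0 one_ne_zero hab, div_eq_inv_mul,
    ← intervalIntegral.integral_const_mul]
  simp [gaussianPDFReal, neg_div]

lemma gaussianReal_zero_one_real_Icc_one_le_seven_tenths :
    (gaussianReal 0 1).real (Set.Icc (-1) 1) ≤ 7 / 10 := by
  have hpi : 2.5 ≤ √(2 * Real.pi) := Real.le_sqrt_of_sq_le (by linarith [Real.pi_gt_d2])
  rw [gaussianReal_zero_one_real_Icc (by norm_num), div_le_iff₀ (by positivity)]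
  linarith [integral_neg_one_one_exp_neg_sq_div_two_le]

lemma nineteen_twentieths_le_gaussianReal_zero_one_real_Icc_two :
    19 / 20 ≤ (gaussianReal 0 1).real (Set.Icc (-2) 2) := by
  have hpi : √(2 * Real.pi) ≤ 2.51 :=
    (Real.sqrt_le_left (by norm_num)).2 (by linarith [Real.pi_lt_d2])
  rw [gaussianReal_zero_one_real_Icc (by norm_num), le_div_iff₀ (by positivity)]
  linarith [le_integral_neg_two_two_exp_neg_sq_div_two]

lemma gaussianReal_zero_real_neg (v : ℝ≥0) {s : Set ℝ} (hs : MeasurableSet s) :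
    (gaussianReal 0 v).real (-s) = (gaussianReal 0 v).real s := by
  have hmap : (gaussianReal 0 v).map (fun x ↦ -x) = gaussianReal 0 v := by
    rw [gaussianReal_map_neg, neg_zero]
  conv_rhs => rw [← hmap, map_measureReal_apply measurable_neg hs]
  rfl

lemma one_sub_gaussianReal_zero_real_Icc_le (v : ℝ≥0) (a : ℝ) :
    1 - (gaussianReal 0 v).real (Set.Icc (-a) a) ≤ 2 * (gaussianReal 0 v).real (Set.Ici a) := by
  have hcover : (Set.Icc (-a) a)ᶜ ⊆ -Set.Ici a ∪ Set.Ici a := fun x hx ↦ by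
    grind [Set.mem_neg]
  calc 1 - (gaussianReal 0 v).real (Set.Icc (-a) a)
      = (gaussianReal 0 v).real (Set.Icc (-a) a)ᶜ :=
        (probReal_compl_eq_one_sub measurableSet_Icc).symm
    _ ≤ (gaussianReal 0 v).real (-Set.Ici a) + (gaussianReal 0 v).real (Set.Ici a) :=
        (measureReal_mono hcover).trans (measureReal_union_le _ _)
    _ = 2 * (gaussianReal 0 v).real (Set.Ici a) := by
        rw [gaussianReal_zero_real_neg v measurableSet_Ici, two_mul]

lemma three_twentieths_le_gaussianReal_zero_one_real_Ici_one :
    3 / 20 ≤ (gaussianReal 0 1).real (Set.Ici 1) := by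
  linarith [one_sub_gaussianReal_zero_real_Icc_le 1 1,
    gaussianReal_zero_one_real_Icc_one_le_seven_tenths]

lemma gaussianReal_map_sqrt_mul (v : ℝ≥0) :
    (gaussianReal 0 1).map (√v * ·) = gaussianReal 0 v := by
  rw [gaussianReal_map_const_mul, mul_zero, mul_one]
  congr 1
  exact NNReal.eq (Real.sq_sqrt v.coe_nonneg)

variable {Ω : Type*} {mΩ : MeasurableSpace Ω} {P : Measure Ω} {X : Ω → ℝ} {v : ℝ≥0}

lemma measureReal_two_mul_lt_abs_le_one_twentieth_of_hasLaw_gaussianReal {r : ℝ}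
    (hX : HasLaw X (gaussianReal 0 v) P) (hr : √v ≤ r) :
    P.real {ω | 2 * r < |X ω|} ≤ 1 / 20 := by
  have hmeas : MeasurableSet {x : ℝ | 2 * r < |x|} := measurableSet_lt (by fun_prop) (by fun_prop)
  have hsub : (√v * ·) ⁻¹' {x | 2 * r < |x|} ⊆ (Set.Icc (-2) 2)ᶜ := by
    intro x (hx : 2 * r < |√v * x|) hx2
    have habs : √v * |x| ≤ √v * 2 := by gcongr; exact abs_le.2 hx2
    rw [abs_mul, abs_of_nonneg (Real.sqrt_nonneg _)] at hx
    linarith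
  rw [hX.measureReal_eq hmeas, ← gaussianReal_map_sqrt_mul v,
    map_measureReal_apply (by fun_prop) hmeas]
  have hcompl := probReal_compl_eq_one_sub (μ := gaussianReal 0 1)
    (measurableSet_Icc (a := (-2 : ℝ)) (b := 2))
  linarith [measureReal_mono (μ := gaussianReal 0 1) hsub,
    nineteen_twentieths_le_gaussianReal_zero_one_real_Icc_two]

lemma three_twentieths_le_measureReal_mul_nonneg_and_le_sq_of_hasLaw_gaussianReal
    (hX : HasLaw X (gaussianReal 0 v) P) (a : ℝ) :
    3 / 20 ≤ P.real {ω | 0 ≤ a * X ω ∧ v ≤ X ω ^ 2} := by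
  have hmeas (a : ℝ) : MeasurableSet {x : ℝ | 0 ≤ a * x ∧ v ≤ x ^ 2} := by measurability
  rw [hX.measureReal_eq (hmeas a)]
  wlog ha : 0 ≤ a generalizing a
  · rw [← gaussianReal_zero_real_neg v (hmeas a)]
    simpa using this (-a) (by linarith)
  refine three_twentieths_le_gaussianReal_zero_one_real_Ici_one.trans ?_
  rw [← gaussianReal_map_sqrt_mul v, map_measureReal_apply (by fun_prop) (hmeas a)]
  refine measureReal_mono fun x (hx : 1 ≤ x) ↦ ⟨by positivity, ?_⟩
  rw [mul_pow, Real.sq_sqrt v.coe_nonneg]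
  exact le_mul_of_one_le_right v.coe_nonneg (one_le_pow₀ hx)

end GaussianReal

section GaussianSum

variable {ι : Type*} [Fintype ι]

lemma hasLaw_sum_gaussianReal_of_iIndepFun {Ω : Type*} {mΩ : MeasurableSpace Ω} {P : Measure Ω}
    {X : ι → Ω → ℝ} {m : ι → ℝ} {v : ι → ℝ≥0}
    (hX : ∀ i, HasLaw (X i) (gaussianReal (m i) (v i)) P) (hindep : iIndepFun X P) :
    HasLaw (fun ω ↦ ∑ i, X i ω) (gaussianReal (∑ i, m i) (∑ i, v i)) P where
  aemeasurable := Finset.aemeasurable_fun_sum _ fun i _ ↦ (hX i).aemeasurable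
  map_eq := by
    have := hindep.isProbabilityMeasure
    refine Measure.ext_of_charFun (funext fun t ↦ ?_)
    rw [hindep.charFun_map_fun_sum_eq_prod fun i ↦ (hX i).aemeasurable]
    simp only [Finset.prod_apply, (hX _).map_eq, charFun_gaussianReal, ← Complex.exp_sum]
    congr 1
    push_cast
    simp only [Finset.sum_sub_distrib, Finset.mul_sum, Finset.sum_mul, Finset.sum_div]

lemma hasLaw_sum_mul_pi_gaussianReal (z : ι → ℝ) :
    HasLaw (fun g : ι → ℝ ↦ ∑ i, z i * g i)
      (gaussianReal 0 (.mk (∑ i, z i ^ 2) (Finset.sum_nonneg fun i _ ↦ sq_nonneg (z i))))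
      (Measure.pi fun _ : ι ↦ gaussianReal 0 1) := by
  have hcoord (i : ι) := gaussianReal_const_mul
    (measurePreserving_eval (fun _ : ι ↦ gaussianReal 0 1) i).hasLaw (z i)
  have hindep : iIndepFun (fun (i : ι) (g : ι → ℝ) ↦ z i * g i)
      (Measure.pi fun _ : ι ↦ gaussianReal 0 1) :=
    iIndepFun_pi (X := fun i x ↦ z i * x) fun i ↦ by fun_prop
  convert hasLaw_sum_gaussianReal_of_iIndepFun hcoord hindep
  · simp
  · exact NNReal.eq (by simp)

lemma hasLaw_sum_mul_sub_sum_mul_pi_gaussianReal (z w : ι → ℝ) :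
    HasLaw (fun g : ι → ℝ ↦ ∑ i, z i * g i - ∑ i, w i * g i)
      (gaussianReal 0
        (.mk (∑ i, (z i - w i) ^ 2) (Finset.sum_nonneg fun i _ ↦ sq_nonneg (z i - w i))))
      (Measure.pi fun _ : ι ↦ gaussianReal 0 1) := by
  simpa only [sub_mul, Finset.sum_sub_distrib] using
    hasLaw_sum_mul_pi_gaussianReal fun i ↦ z i - w i

end GaussianSum

lemma mul_sqrt_sq_add_le_abs_add_mul {c a x s : ℝ} (hc₀ : 0 ≤ c) (hc₁ : c ≤ 1)
    (hax : 0 ≤ a * x) (hs : s ≤ x ^ 2) : c * √(a ^ 2 + s) ≤ |a + c * x| :=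
  have hca : c ^ 2 * a ^ 2 ≤ a ^ 2 :=
    mul_le_of_le_one_left (sq_nonneg a) (pow_le_one₀ hc₀ hc₁)
  have hcx : c ^ 2 * s ≤ c ^ 2 * x ^ 2 := by gcongr
  calc c * √(a ^ 2 + s) = √(c ^ 2 * (a ^ 2 + s)) := by
        rw [Real.sqrt_mul (sq_nonneg c), Real.sqrt_sq hc₀]
    _ ≤ √((a + c * x) ^ 2) := by
        gcongr
        linarith [mul_nonneg hc₀ hax]
    _ = |a + c * x| := Real.sqrt_sq_eq_abs _

lemma add_one_sixth_mul_mem_Icc {T y x : ℝ} (hy : y ∈ Set.Icc 0 T) (hx : |x| ≤ 2 * T) :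
    y + (1 / 6) * x ∈ Set.Icc (-(T / 3)) (4 * T / 3) := by
  obtain ⟨hx₁, hx₂⟩ := abs_le.1 hx
  exact ⟨by linarith [hy.1], by linarith [hy.2]⟩

theorem stmt14_general {Ω : Type*} {mΩ : MeasurableSpace Ω} {P : Measure Ω} {U V : Ω → ℝ}
    {su sv s : ℝ≥0} (hU : HasLaw U (gaussianReal 0 su) P) (hV : HasLaw V (gaussianReal 0 sv) P)
    (hUV : HasLaw (fun ω ↦ U ω - V ω) (gaussianReal 0 s) P) {T yu yv : ℝ}
    (hyu : yu ∈ Set.Icc 0 T) (hyv : yv ∈ Set.Icc 0 T) (hsu : √su ≤ T) (hsv : √sv ≤ T) :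
    (1 / 20 : ENNReal) ≤ P {ω |
      yv + (1 / 6) * V ω ∈ Set.Icc (-(T / 3)) (4 * T / 3) ∧
      yu + (1 / 6) * U ω ∈ Set.Icc (-(T / 3)) (4 * T / 3) ∧
      (1 / 6) * √((yu - yv) ^ 2 + s) ≤ |(yu + (1 / 6) * U ω) - (yv + (1 / 6) * V ω)|} := by
  have := hU.isProbabilityMeasure
  set good := {ω | _ ∧ _ ∧ _}
  set aligned := {ω | 0 ≤ (yu - yv) * (U ω - V ω) ∧ s ≤ (U ω - V ω) ^ 2}
  set largeU := {ω | 2 * T < |U ω|}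
  set largeV := {ω | 2 * T < |V ω|}
  have haligned : 3 / 20 ≤ P.real aligned :=
    three_twentieths_le_measureReal_mul_nonneg_and_le_sq_of_hasLaw_gaussianReal hUV (yu - yv)
  have hlargeU : P.real largeU ≤ 1 / 20 :=
    measureReal_two_mul_lt_abs_le_one_twentieth_of_hasLaw_gaussianReal hU hsu
  have hlargeV : P.real largeV ≤ 1 / 20 :=
    measureReal_two_mul_lt_abs_le_one_twentieth_of_hasLaw_gaussianReal hV hsv
  have hcover : aligned ⊆ good ∪ largeU ∪ largeV := by
    rintro ω ⟨hsign, hsq⟩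
    by_contra! hω
    simp only [Set.mem_union, not_or, largeU, largeV, Set.mem_ofPred_eq, not_lt] at hω
    obtain ⟨⟨hgood, hUω⟩, hVω⟩ := hω
    refine hgood ⟨add_one_sixth_mul_mem_Icc hyv hVω, add_one_sixth_mul_mem_Icc hyu hUω, ?_⟩
    rw [add_sub_add_comm, ← mul_sub]
    exact mul_sqrt_sq_add_le_abs_add_mul (by norm_num) (by norm_num) hsign hsq
  have hunion : P.real aligned ≤ P.real good + P.real largeU + P.real largeV :=
    calc P.real aligned ≤ P.real (good ∪ largeU ∪ largeV) := measureReal_mono hcover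
      _ ≤ P.real (good ∪ largeU) + P.real largeV := measureReal_union_le _ _
      _ ≤ P.real good + P.real largeU + P.real largeV := by gcongr; exact measureReal_union_le _ _
  have hgood : 1 / 20 ≤ P.real good := by linarith
  refine (ENNReal.toReal_le_toReal (by finiteness) (measure_ne_top P good)).1 ?_
  simpa [← measureReal_def] using hgood

/-- Claim 4.9 (`clipping_claim_lower`): with `y_u, y_v ∈ [0,T]`,
`‖z_u‖₂, ‖z_v‖₂ ≤ T`, and a standard Gaussian vector `g ∈ ℝ^k`, the three
events `A₁ : f_g(v) ∈ [−T/3, 4T/3]`, `A₂ : f_g(u) ∈ [−T/3, 4T/3]`, and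
`A₃ : |f_g(u) − f_g(v)| ≥ (1/6)·‖x_u − x_v‖₂` hold simultaneously with
probability at least `1/20`, where `f_g(w) = y_w + (1/6)·⟨z_w, g⟩`. -/
theorem stmt14 (T : ℝ) (hT : 0 < T) (k : ℕ)
    (yu yv : ℝ) (hyu : yu ∈ Set.Icc 0 T) (hyv : yv ∈ Set.Icc 0 T)
    (zu zv : Fin k → ℝ)
    (hzu : Real.sqrt (∑ i, zu i ^ 2) ≤ T)
    (hzv : Real.sqrt (∑ i, zv i ^ 2) ≤ T) :
    (1 / 20 : ENNReal) ≤
      (Measure.pi fun _ : Fin k => gaussianReal 0 1)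
        {g : Fin k → ℝ |
          (yv + (1 / 6) * ∑ i, zv i * g i) ∈ Set.Icc (-(T / 3)) (4 * T / 3) ∧
          (yu + (1 / 6) * ∑ i, zu i * g i) ∈ Set.Icc (-(T / 3)) (4 * T / 3) ∧
          (1 / 6) * Real.sqrt ((yu - yv) ^ 2 + ∑ i, (zu i - zv i) ^ 2) ≤
            |(yu + (1 / 6) * ∑ i, zu i * g i) -
              (yv + (1 / 6) * ∑ i, zv i * g i)|} := by
  exact stmt14_general (hasLaw_sum_mul_pi_gaussianReal zu) (hasLaw_sum_mul_pi_gaussianReal zv)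
    (hasLaw_sum_mul_sub_sum_mul_pi_gaussianReal zu zv) hyu hyv hzu hzv
end

section
/- Let T > 0 and let F_{α,T} : ℝ → ℝ be the flip map: F_{α,T}(x) = T − α·(x − T) if x > T; F_{α,T}(x) = x if 0 ≤ x ≤ T; F_{α,T}(x) = −α·x if x < 0. Then for all a, b ∈ [−T/3, 4T/3], the average over α chosen uniformly from {1/3, 1} satisfies (1/2)·(|F_{1/3,T}(a) − F_{1/3,T}(b)| + |F_{1,T}(a) − F_{1,T}(b)|) ≥ (1/6)·|a − b|. -/
/-- The flip map `F_{α,T}` of Step 2 of Lemma 4.5. -/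
noncomputable def flipMap (α T x : ℝ) : ℝ :=
  if T < x then T - α * (x - T) else if x < 0 then -α * x else x

/-!
The map `F₀` truncates to `[0, T]` and `F_α x = (1 + α) F₀ x - α x`. Eliminating `F₀` between the
parameters `α` and `β` gives `(1 + β) F_α x - (1 + α) F_β x = (β - α) x`: for `α ≠ β` every point
is a fixed linear combination of its two images, so `F_α` and `F_β` cannot both bring two points
close together. For `α = 1/3`, `β = 1` the distance of the points is at most
`max (4/3) 2 / (2/3) = 3` times the sum of the two image distances.
-/

theorem flipMap_eq_flipMap_zero (α T x : ℝ) :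
    flipMap α T x = (1 + α) * flipMap 0 T x - α * x := by
  unfold flipMap
  split_ifs <;> ring

theorem one_add_mul_flipMap_sub_one_add_mul_flipMap (α β T x : ℝ) :
    (1 + β) * flipMap α T x - (1 + α) * flipMap β T x = (β - α) * x := by
  rw [flipMap_eq_flipMap_zero α, flipMap_eq_flipMap_zero β]
  ring

theorem abs_sub_mul_abs_sub_le_flipMap (α β T a b : ℝ) :
    |β - α| * |a - b| ≤
      |1 + β| * |flipMap α T a - flipMap α T b| + |1 + α| * |flipMap β T a - flipMap β T b| := by
  have elimination : (β - α) * (a - b) =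
      (1 + β) * (flipMap α T a - flipMap α T b) - (1 + α) * (flipMap β T a - flipMap β T b) := by
    linear_combination one_add_mul_flipMap_sub_one_add_mul_flipMap α β T b -
      one_add_mul_flipMap_sub_one_add_mul_flipMap α β T a
  rw [← abs_mul, ← abs_mul, ← abs_mul, elimination]
  exact abs_sub ((1 + β) * (flipMap α T a - flipMap α T b))
    ((1 + α) * (flipMap β T a - flipMap β T b))

theorem stmt16_general (α β T a b : ℝ) :
    |β - α| * |a - b| ≤ max |1 + α| |1 + β| *
      (|flipMap α T a - flipMap α T b| + |flipMap β T a - flipMap β T b|) := by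
  rw [mul_add]
  refine (abs_sub_mul_abs_sub_le_flipMap α β T a b).trans ?_
  gcongr
  · exact le_max_right _ _
  · exact le_max_left _ _

/-- Claim 4.12 (`flipping_claim2`): for `a, b ∈ [−T/3, 4T/3]`, the average over
`α ∈ {1/3, 1}` of `|F_{α,T}(a) − F_{α,T}(b)|` is at least `(1/6)·|a − b|`. -/
theorem stmt16 (T : ℝ) (hT : 0 < T) (a b : ℝ)
    (ha : a ∈ Set.Icc (-(T / 3)) (4 * T / 3))
    (hb : b ∈ Set.Icc (-(T / 3)) (4 * T / 3)) :
    (1 / 6) * |a - b| ≤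
      (1 / 2) * (|flipMap (1 / 3) T a - flipMap (1 / 3) T b| +
        |flipMap 1 T a - flipMap 1 T b|) := by
  have key : 2 / 3 * |a - b| ≤ 2 * (|flipMap (1 / 3) T a - flipMap (1 / 3) T b| +
      |flipMap 1 T a - flipMap 1 T b|) := by
    convert stmt16_general (1 / 3) 1 T a b using 2 <;> norm_num
  linarith
end

section
/- Let V be a finite set and cap : V × V → ℝ≥0 a symmetric function vanishing on the diagonal. Let A ⊆ V with 1 ≤ |A| ≤ |V∖A|, and let W ⊆ V with |W| < |A|/3. Put U = A∖W and Ū = (V∖A)∖W. Then min{|U|, |Ū|} > (2/3)·|A| and cap(U, Ū) ≤ cap(A, V∖A); consequently, the uniform sparsity of the induced cut satisfies cap(U, Ū)/min{|U|, |Ū|} ≤ (3/2)·cap(A, V∖A)/|A|. -/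
section Cut

open Finset

variable {V : Type*}

/-- The capacity `cap(X, Y)` between two vertex sets: the total capacity of the pairs leading from
`X` to `Y`. It is defined for arbitrary `X` and `Y` and a possibly asymmetric `cap`; a cut is the
case of complementary sets. -/
def cutCapacity {M : Type*} [AddCommMonoid M] (cap : V → V → M) (X Y : Finset V) : M :=
  ∑ u ∈ X, ∑ v ∈ Y, cap u v

section OrderedAddCommMonoid

variable {M : Type*} [AddCommMonoid M] [PartialOrder M] [IsOrderedAddMonoid M] {cap : V → V → M}

lemma cutCapacity_nonneg (hcap : ∀ u v, 0 ≤ cap u v) (X Y : Finset V) :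
    0 ≤ cutCapacity cap X Y :=
  sum_nonneg fun u _ ↦ sum_nonneg fun v _ ↦ hcap u v

lemma cutCapacity_mono (hcap : ∀ u v, 0 ≤ cap u v) {X X' Y Y' : Finset V}
    (hX : X ⊆ X') (hY : Y ⊆ Y') : cutCapacity cap X Y ≤ cutCapacity cap X' Y' := by
  simp only [cutCapacity, ← sum_product']
  exact sum_le_sum_of_subset_of_nonneg (product_subset_product hX hY) fun p _ _ ↦ hcap p.1 p.2

end OrderedAddCommMonoid

variable {K : Type*} [Field K] [LinearOrder K]

/-- The uniform sparsity `cap(X, Y) / min {|X|, |Y|}` of a cut with sides `X` and `Y`. The sides are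
separate arguments because `X ∪ Y` need not be the whole vertex set. If a side is empty, division
by zero makes the value `0`. -/
def uniformSparsity (cap : V → V → K) (X Y : Finset V) : K :=
  cutCapacity cap X Y / min (#X : K) #Y

variable [IsStrictOrderedRing K] {cap : V → V → K}

lemma uniformSparsity_le_cutCapacity_div (hcap : ∀ u v, 0 ≤ cap u v) {X X' Y Y' : Finset V}
    (hX : X ⊆ X') (hY : Y ⊆ Y') {m : K} (hm : 0 < m) (hmin : m ≤ min (#X : K) #Y) :
    uniformSparsity cap X Y ≤ cutCapacity cap X' Y' / m :=
  div_le_div₀ (cutCapacity_nonneg hcap X' Y') (cutCapacity_mono hcap hX hY) hm hmin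

variable [DecidableEq V] {A B W : Finset V} {c : K}

lemma mul_card_lt_card_sdiff (hAB : #A ≤ #B) (hW : (#W : K) < (1 - c) * #A) :
    c * #A < (#(B \ W) : K) := by
  have hAB' : (#A : K) ≤ #B := mod_cast hAB
  have hB : (#B : K) ≤ #(B \ W) + #W := mod_cast card_le_card_sdiff_add_card
  linarith

theorem stmt19_general (hcap : ∀ u v, 0 ≤ cap u v) (hAB : #A ≤ #B) (hc : 0 < c)
    (hW : (#W : K) < (1 - c) * #A) :
    c * #A < min (#(A \ W) : K) #(B \ W) ∧
    cutCapacity cap (A \ W) (B \ W) ≤ cutCapacity cap A B ∧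
    uniformSparsity cap (A \ W) (B \ W) ≤ c⁻¹ * cutCapacity cap A B / #A := by
  have hmin : c * #A < min (#(A \ W) : K) #(B \ W) :=
    lt_min (mul_card_lt_card_sdiff le_rfl hW) (mul_card_lt_card_sdiff hAB hW)
  have hA : (0 : K) < #A :=
    (Nat.cast_nonneg _).lt_of_ne' (right_ne_zero_of_mul ((Nat.cast_nonneg _).trans_lt hW).ne')
  refine ⟨hmin, cutCapacity_mono hcap sdiff_subset sdiff_subset, ?_⟩
  calc
    uniformSparsity cap (A \ W) (B \ W) ≤ cutCapacity cap A B / (c * #A) :=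
      uniformSparsity_le_cutCapacity_div hcap sdiff_subset sdiff_subset (mul_pos hc hA) hmin.le
    _ = c⁻¹ * cutCapacity cap A B / #A := by rw [← div_div, div_eq_inv_mul _ c]

end Cut

/-- Content of Claim 5.3 (`clm_stdcase_aprx`): removing a set `W` with
`|W| < |A|/3` from both sides of a cut `(A, V∖A)` with `1 ≤ |A| ≤ |V∖A|`
leaves sides `U = A∖W` and `Ū = (V∖A)∖W` with `min{|U|,|Ū|} > (2/3)|A|` and
`cap(U,Ū) ≤ cap(A,V∖A)`; hence the uniform sparsity of the induced cut is at
most `(3/2)·cap(A,V∖A)/|A|`. -/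
theorem stmt19 {V : Type*} [Fintype V] [DecidableEq V]
    (cap : V → V → ℝ)
    (hcap0 : ∀ u v, 0 ≤ cap u v) (hcapsym : ∀ u v, cap u v = cap v u)
    (hcapdiag : ∀ v, cap v v = 0)
    (A W : Finset V) (hA1 : 1 ≤ A.card) (hA2 : A.card ≤ Aᶜ.card)
    (hW : (W.card : ℝ) < (A.card : ℝ) / 3) :
    (2 / 3 : ℝ) * A.card <
      min (((A \ W).card : ℝ)) (((Aᶜ \ W).card : ℝ)) ∧
    (∑ u ∈ A \ W, ∑ v ∈ Aᶜ \ W, cap u v) ≤ (∑ u ∈ A, ∑ v ∈ Aᶜ, cap u v) ∧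
    (∑ u ∈ A \ W, ∑ v ∈ Aᶜ \ W, cap u v) /
        min (((A \ W).card : ℝ)) (((Aᶜ \ W).card : ℝ)) ≤
      (3 / 2) * (∑ u ∈ A, ∑ v ∈ Aᶜ, cap u v) / A.card := by
  have h := stmt19_general (W := W) (c := 2 / 3) hcap0 hA2 (by norm_num) (by linarith)
  rwa [inv_div] at h
end
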